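/- For every class C of finite simple graphs of bounded expansion there is an absolute constant c such that every graph G in C has adjacent closed vertex-distinguishing number dis[G] ≤ c. In particular such a constant exists for the class of all planar graphs. -/

import Mathlib

open scoped Classical
open scoped Function

namespace InducedArboricity

/-- The edges of the subgraph of `G` induced by vertex set `S`, viewed as edges of `G`. -/
def forestEdges {V : Type*} (G : SimpleGraph V) (S : Set V) : Set (Sym2 V) :=
  {e | e ∈ G.edgeSet ∧ ∀ x ∈ e, x ∈ S}

/-- The number of edges of the connected component of `v` in `H`. -/
noncomputable def compEdgeCount {W : Type*} (H : SimpleGraph W) (v : W) : ℕ :=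
  {e | e ∈ H.edgeSet ∧ ∀ x ∈ e, H.Reachable v x}.ncard

/-- `S` induces a `k`-strong forest in `G`: the induced subgraph is acyclic and each of its
connected components has at least `k` edges. -/
def IsStrongForest {V : Type*} (G : SimpleGraph V) (k : ℕ) (S : Set V) : Prop :=
  (G.induce S).IsAcyclic ∧ ∀ v : S, k ≤ compEdgeCount (G.induce S) v

/-- An edge `e` of `G` is `k`-valid if it lies in some `k`-strong forest of `G`. -/
def KValid {V : Type*} (G : SimpleGraph V) (k : ℕ) (e : Sym2 V) : Prop :=
  ∃ S : Set V, IsStrongForest G k S ∧ e ∈ forestEdges G S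

/-- The `k`-strong induced arboricity: the least number of `k`-strong forests of `G`
covering all `k`-valid edges of `G`. -/
noncomputable def fStrong {V : Type*} (G : SimpleGraph V) (k : ℕ) : ℕ :=
  sInf {N | ∃ F : Fin N → Set V,
    (∀ i, IsStrongForest G k (F i)) ∧
    ∀ e : Sym2 V, KValid G k e → ∃ i, e ∈ forestEdges G (F i)}

/-- `G` is a `d`-shallow minor of `H`. -/
def IsShallowMinor {V W : Type*} (d : ℕ) (G : SimpleGraph V) (H : SimpleGraph W) : Prop :=
  ∃ B : V → Set W,
    Pairwise (Disjoint on B) ∧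
    (∀ v, ∃ c : B v, ∀ y : B v,
      (H.induce (B v)).Reachable c y ∧ (H.induce (B v)).dist c y ≤ d) ∧
    (∀ u v, G.Adj u v → ∃ x ∈ B u, ∃ y ∈ B v, H.Adj x y)

/-- A class of finite simple graphs, one set of graphs for each number of vertices. -/
def GraphClass : Type :=
  ∀ n : ℕ, Set (SimpleGraph (Fin n))

/-- A class of graphs has bounded expansion if for every `d` there is a constant `a` such that
every `d`-shallow minor of a member of the class has at most `a` times as many edges
as vertices. -/
def BoundedExpansion (C : GraphClass) : Prop :=
  ∀ d : ℕ, ∃ a : ℕ, ∀ (m : ℕ) (G : SimpleGraph (Fin m)),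
    (∃ n : ℕ, ∃ H ∈ C n, IsShallowMinor d G H) → G.edgeSet.ncard ≤ a * m

/-- A class of graphs is nowhere dense if for every `d` some graph is not a `d`-shallow minor
of any member of the class. -/
def NowhereDense (C : GraphClass) : Prop :=
  ∀ d : ℕ, ∃ (m : ℕ) (G : SimpleGraph (Fin m)), ¬ ∃ n : ℕ, ∃ H ∈ C n, IsShallowMinor d G H

/-- The closed neighborhood of `v` in `G`. -/
def closedNbr {V : Type*} (G : SimpleGraph V) (v : V) : Set V :=
  insert v (G.neighborSet v)

/-- The sum of the labels over the closed neighborhood of `v`. -/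
noncomputable def closedNbrSum {V : Type*} [Fintype V] (G : SimpleGraph V)
    (f : V → ℕ) (v : V) : ℕ :=
  ∑ x : V, if x ∈ closedNbr G v then f x else 0

/-- A labeling is distinguishing if adjacent vertices with different closed neighborhoods
receive different label sums over their closed neighborhoods. -/
def Distinguishing {V : Type*} [Fintype V] (G : SimpleGraph V) (f : V → ℕ) : Prop :=
  ∀ u v : V, G.Adj u v → closedNbr G u ≠ closedNbr G v →
    closedNbrSum G f u ≠ closedNbrSum G f v

/-- The adjacent closed vertex-distinguishing number of `G`. -/
noncomputable def disNumber {V : Type*} [Fintype V] (G : SimpleGraph V) : ℕ :=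
  sInf {L | 1 ≤ L ∧ ∃ f : V → ℕ, (∀ v, 1 ≤ f v ∧ f v ≤ L) ∧ Distinguishing G f}

/-- A proper coloring in which any two color classes together induce a forest. -/
def IsAcyclicColoring {V : Type*} (G : SimpleGraph V) {m : ℕ} (c : V → Fin m) : Prop :=
  (∀ u v : V, G.Adj u v → c u ≠ c v) ∧
  ∀ i j : Fin m, (G.induce {v | c v = i ∨ c v = j}).IsAcyclic

/-- The acyclic chromatic number of `G`. -/
noncomputable def chiAcyc {V : Type*} (G : SimpleGraph V) : ℕ :=
  sInf {m | ∃ c : V → Fin m, IsAcyclicColoring G c}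

/-- The edge arboricity of `G`: the least number of (not necessarily induced) forests
covering all edges of `G`. -/
noncomputable def arboricity {V : Type*} (G : SimpleGraph V) : ℕ :=
  sInf {N | ∃ F : Fin N → SimpleGraph V,
    (∀ i, F i ≤ G ∧ (F i).IsAcyclic) ∧
    ∀ e ∈ G.edgeSet, ∃ i, e ∈ (F i).edgeSet}

/-- `G` admits a tree decomposition of width at most `t`. -/
def HasTreewidthAtMost {V : Type*} (G : SimpleGraph V) (t : ℕ) : Prop :=
  ∃ (ι : Type) (T : SimpleGraph ι) (B : ι → Finset V),
    T.IsTree ∧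
    (∀ e ∈ G.edgeSet, ∃ i, ∀ x ∈ e, x ∈ B i) ∧
    (∀ v : V, (T.induce {i | v ∈ B i}).Connected) ∧
    (∀ i, (B i).card ≤ t + 1)

/-- The tree-width of `G`. -/
noncomputable def treewidth {V : Type*} (G : SimpleGraph V) : ℕ :=
  sInf {t | HasTreewidthAtMost G t}

/-- `G` has tree-depth at most `d`: there is a "forest order" on the vertices (the
ancestor order of a rooted spanning forest) in which ancestor sets are chains of at most
`d` vertices and endpoints of edges of `G` are comparable.  Equivalently, every connected
component of `G` is a subgraph of the transitive closure of a rooted tree of depth `d`. -/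
def HasTreedepthAtMost {V : Type*} (G : SimpleGraph V) (d : ℕ) : Prop :=
  ∃ le : V → V → Prop, IsPartialOrder V le ∧
    (∀ v : V, IsChain le {u | le u v}) ∧
    (∀ u v : V, G.Adj u v → le u v ∨ le v u) ∧
    (∀ v : V, {u | le u v}.ncard ≤ d)

/-- The tree-depth of `G`. -/
noncomputable def treedepth {V : Type*} (G : SimpleGraph V) : ℕ :=
  sInf {d | HasTreedepthAtMost G d}

/-- `G` is a minor of `H`, witnessed by disjoint connected branch sets. -/
def IsMinorOf {V W : Type*} (G : SimpleGraph V) (H : SimpleGraph W) : Prop :=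
  ∃ B : V → Set W,
    Pairwise (Disjoint on B) ∧
    (∀ v, (B v).Nonempty) ∧
    (∀ v, (H.induce (B v)).Connected) ∧
    (∀ u v, G.Adj u v → ∃ x ∈ B u, ∃ y ∈ B v, H.Adj x y)

/-- A class of graphs closed under taking minors. -/
def MinorClosed (C : GraphClass) : Prop :=
  ∀ (m n : ℕ) (G : SimpleGraph (Fin m)) (H : SimpleGraph (Fin n)),
    H ∈ C n → IsMinorOf G H → G ∈ C m

/-- Planarity, via Wagner's characterization: no `K₅` and no `K₃,₃` minor. -/
def IsPlanar {V : Type*} (G : SimpleGraph V) : Prop :=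
  ¬ IsMinorOf (SimpleGraph.completeGraph (Fin 5)) G ∧
  ¬ IsMinorOf (completeBipartiteGraph (Fin 3) (Fin 3)) G

/-!
By the Chinese remainder theorem it suffices to split the edges `uv` with `N[u] ≠ N[v]` into
boundedly many classes such that, modulo any `q`, some labeling distinguishes the ends of all edges
of one class. Order the vertices and color them so that each vertex differs in color from all
vertices weakly 3-reachable from it; a class then fixes the colors of `u < v`. If one end of each
edge has a private neighbor later than itself, label only these witnesses: the weak coloring makes
the system of required differences triangular with diagonal `±1`, hence solvable. If no such
neighbor exists, `N[u]` and `N[v]` differ only in earlier vertices, which have distinct colors, so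
the indicator of one color works.

The number of colors is bounded if the 2-shallow minors of the graph are sparse. The order is built
from its end: with `S` the set of vertices still to be placed, consider the pairs in `S` joined by
a short path with no inner vertex in `S`. Such paths with disjoint interiors form a shallow minor,
so there are few of them, and each vertex outside `S` is on few such paths by the choices already
made. Thus there are few such pairs, and some vertex of `S` is in few of them: it comes last in `S`.

Planar graphs have no `K₅` minor, and a graph without a `K_t` minor is sparse: contract edges into a
connected set `A` until this would lose too many edges. Then `N(A)` induces a graph of large minimum
degree, which has a `K_{t-1}` minor by induction, and `A` completes it to a `K_t` minor.
-/

/-! ### Combining labelings modulo coprime numbers -/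

section Separable

variable {V : Type*} [Fintype V] {G : SimpleGraph V}

/-- A relation between vertices is *separable* if modulo every `q ≥ 2` some labeling gives
different closed neighborhood sums to the two vertices of each related pair. -/
def Separable (G : SimpleGraph V) (E : V → V → Prop) : Prop :=
  ∀ q : ℕ, 1 < q → ∃ f : V → ZMod q, ∀ u v, E u v →
    ∑ x with x ∈ closedNbr G u, f x ≠ ∑ x with x ∈ closedNbr G v, f x

theorem cast_closedNbrSum {R : Type*} [Semiring R] (f : V → ℕ) (v : V) :
    (closedNbrSum G f v : R) = ∑ x with x ∈ closedNbr G v, (f x : R) := by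
  rw [closedNbrSum, ← Finset.sum_filter, Nat.cast_sum]

theorem exists_natCast_eq_of_pairwise_coprime {ι : Type*} [Fintype ι] {q : ι → ℕ}
    (hq : Pairwise (Nat.Coprime on q)) (hpos : ∀ i, 0 < q i) (a : ∀ i, ZMod (q i)) :
    ∃ k, 1 ≤ k ∧ k ≤ ∏ i, q i ∧ ∀ i, (k : ZMod (q i)) = a i := by
  have : NeZero (∏ i, q i) := ⟨Finset.prod_ne_zero_iff.mpr fun i _ => (hpos i).ne'⟩
  set r := (ZMod.prodEquivPi q hq).symm a with hr
  refine ⟨(r - 1).val + 1, Nat.le_add_left _ _, (r - 1).val_lt, fun i => ?_⟩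
  have hri : ZMod.castHom (Finset.dvd_prod_of_mem q (Finset.mem_univ i)) (ZMod (q i)) r = a i := by
    rw [← ZMod.prodEquivPi_apply q hq, hr, RingEquiv.apply_symm_apply]
  rw [← hri, ← map_natCast (ZMod.castHom (Finset.dvd_prod_of_mem q (Finset.mem_univ i)) _)]
  push_cast
  rw [ZMod.natCast_zmod_val, sub_add_cancel]

theorem disNumber_le_prod_of_separable {ι : Type*} [Fintype ι] {E : ι → V → V → Prop}
    (hE : ∀ i, Separable G (E i))
    (hcover : ∀ u v, G.Adj u v → closedNbr G u ≠ closedNbr G v → ∃ i, E i u v ∨ E i v u)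
    {q : ι → ℕ} (hq : Pairwise (Nat.Coprime on q)) (hq1 : ∀ i, 1 < q i) :
    disNumber G ≤ ∏ i, q i := by
  choose f hf using fun i => hE i (q i) (hq1 i)
  choose k hk1 hkq hk using fun x => exists_natCast_eq_of_pairwise_coprime hq
    (fun i => zero_lt_one.trans (hq1 i)) (fun i => f i x)
  refine Nat.sInf_le ⟨Finset.prod_pos fun i _ => zero_lt_one.trans (hq1 i), k,
    fun x => ⟨hk1 x, hkq x⟩, fun u v huv hne hsum => ?_⟩
  obtain ⟨i, hi⟩ := hcover u v huv hne
  have hsum_mod : ∑ x with x ∈ closedNbr G u, f i x = ∑ x with x ∈ closedNbr G v, f i x := by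
    simpa only [cast_closedNbrSum, hk] using congrArg (Nat.cast : ℕ → ZMod (q i)) hsum
  exact hi.elim (fun h => hf i u v h hsum_mod) (fun h => hf i v u h hsum_mod.symm)

theorem disNumber_le_of_separable {ι : Type*} [Fintype ι] {E : ι → V → V → Prop}
    (hE : ∀ i, Separable G (E i))
    (hcover : ∀ u v, G.Adj u v → closedNbr G u ≠ closedNbr G v → ∃ i, E i u v ∨ E i v u) :
    disNumber G ≤ ∏ k : Fin (Fintype.card ι), Nat.nth Nat.Prime k := by
  let e := Fintype.equivFin ι
  rw [← e.prod_comp]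
  refine disNumber_le_prod_of_separable hE hcover (fun i j hij => ?_)
    fun i => (Nat.prime_nth_prime _).one_lt
  rw [Function.onFun, Nat.coprime_primes (Nat.prime_nth_prime _) (Nat.prime_nth_prime _)]
  exact fun h => hij (e.injective (Fin.ext (Nat.nth_injective Nat.infinite_setOfPred_prime h)))

/-- The matrix recording on which side of the symmetric differences the witnesses lie is
triangular with diagonal entries `±1`, so all differences of sums can be prescribed to be `1`. -/
theorem exists_sum_ne_sum_of_triangular {ι R : Type*} [Finite ι] [LinearOrder ι] [CommRing R]
    [Nontrivial R] {A B : ι → Set V} {w : ι → V} (hdiag : ∀ i, w i ∈ symmDiff (A i) (B i))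
    (htri : ∀ i j, w j ∈ symmDiff (A i) (B i) → j ≤ i) :
    ∃ f : V → R, (∀ x, x ∉ Set.range w → f x = 0) ∧
      ∀ i, ∑ x with x ∈ A i, f x ≠ ∑ x with x ∈ B i, f x := by
  have := Fintype.ofFinite ι
  let M : Matrix ι ι R := fun i j => (A i).indicator 1 (w j) - (B i).indicator 1 (w j)
  have hM_zero {i j : ι} (h : w j ∉ symmDiff (A i) (B i)) : M i j = 0 := by
    rw [Set.mem_symmDiff] at h
    by_cases hA : w j ∈ A i <;> by_cases hB : w j ∈ B i <;> simp_all [M]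
  have hM_diag (i : ι) : IsUnit (M i i) := by
    rcases hdiag i with ⟨hA, hB⟩ | ⟨hB, hA⟩ <;> simp [M, hA, hB]
  have hM_det : IsUnit M.det := by
    rw [Matrix.det_of_isLowerTriangular M fun i j hij =>
      hM_zero fun h => (htri i j h).not_gt hij]
    exact IsUnit.prod_univ_iff.mpr hM_diag
  obtain ⟨g, hg⟩ := Matrix.mulVec_surjective_iff_isUnit.mpr
    ((Matrix.isUnit_iff_isUnit_det M).mpr hM_det) 1
  refine ⟨∑ j, Pi.single (w j) (g j), fun x hx => ?_, fun i h => ?_⟩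
  · rw [Finset.sum_apply]
    exact Finset.sum_eq_zero fun j _ => Pi.single_eq_of_ne (fun h => hx ⟨j, h.symm⟩) _
  · have hsum (C : Set V) : ∑ x with x ∈ C, (∑ j, Pi.single (w j) (g j) : V → R) x =
        ∑ j, C.indicator 1 (w j) * g j := by
      simp only [Finset.sum_apply]
      rw [Finset.sum_comm]
      refine Finset.sum_congr rfl fun j _ => ?_
      simp [Set.indicator_apply]
    rw [hsum, hsum, ← sub_eq_zero, ← Finset.sum_sub_distrib] at h
    simp only [← sub_mul] at h
    exact one_ne_zero ((congrFun hg i).symm.trans h)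

theorem sum_ne_sum_of_symmDiff {R : Type*} [AddCommGroup R] {A B : Set V} {f : V → R} {x : V}
    (hx : x ∈ symmDiff A B) (hfx : f x ≠ 0) (hf : ∀ y ∈ symmDiff A B, y ≠ x → f y = 0) :
    ∑ y with y ∈ A, f y ≠ ∑ y with y ∈ B, f y := by
  rw [← sub_ne_zero, Finset.sum_filter, Finset.sum_filter, ← Finset.sum_sub_distrib,
    Finset.sum_eq_single x]
  · rcases hx with ⟨hA, hB⟩ | ⟨hB, hA⟩ <;> simp [hA, hB, hfx]
  · intro y _ hyx
    by_cases hA : y ∈ A <;> by_cases hB : y ∈ B <;>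
      simp [hA, hB, hf y, hyx, Set.mem_symmDiff]
  · exact fun h => absurd (Finset.mem_univ x) h

end Separable

/-! ### Separation by a weak coloring -/

section WeakColoring

variable {V α : Type*} [LinearOrder V] {G : SimpleGraph V} {r : ℕ} {c : V → α}

/-- `x` is *weakly `r`-reachable* from `v` if it is the least vertex of a walk of length at most `r`
from `v` to `x`. -/
def WeaklyReachable (G : SimpleGraph V) (r : ℕ) (v x : V) : Prop :=
  ∃ p : G.Walk v x, p.length ≤ r ∧ ∀ z ∈ p.support, x ≤ z

/-- A *weak `r`-coloring* of an ordered graph separates every vertex from all vertices weakly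
`r`-reachable from it; the least number of colors over all orders is tied to the weak
`r`-coloring number. -/
def IsWeakColoring (G : SimpleGraph V) (r : ℕ) (c : V → α) : Prop :=
  ∀ u v, c u = c v → WeaklyReachable G r v u → u = v

namespace IsWeakColoring

theorem eq_of_walk (h : IsWeakColoring G r c) {u v : V} (huv : c u = c v) (p : G.Walk u v)
    (hp : p.length ≤ r) (hmin : ∀ z ∈ p.support, u ≤ z ∨ v ≤ z) : u = v := by
  wlog hle : u ≤ v generalizing u v
  · exact (this huv.symm p.reverse (by rwa [SimpleGraph.Walk.length_reverse])
      (fun z hz => (hmin z (by simpa using hz)).symm) (le_of_not_ge hle)).symm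
  · exact h u v huv ⟨p.reverse, by rwa [SimpleGraph.Walk.length_reverse],
      fun z hz => (hmin z (by simpa using hz)).elim id hle.trans⟩

theorem ne_of_adj (h : IsWeakColoring G r c) (hr : 1 ≤ r) {u v : V} (huv : G.Adj u v) :
    c u ≠ c v := fun hc =>
  huv.ne <| h.eq_of_walk hc huv.toWalk hr <| by simp

theorem eq_of_adj_adj (h : IsWeakColoring G r c) (hr : 2 ≤ r) {u x v : V} (hc : c u = c v)
    (hux : G.Adj u x) (hxv : G.Adj x v) (hle : u ≤ x) : u = v :=
  h.eq_of_walk hc (.cons hux hxv.toWalk) hr <| by simp [hle]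

theorem eq_of_adj_adj_adj (h : IsWeakColoring G r c) (hr : 3 ≤ r) {u x y v : V} (hc : c u = c v)
    (hux : G.Adj u x) (hxy : G.Adj x y) (hyv : G.Adj y v) (hx : u ≤ x) (hy : u ≤ y) : u = v :=
  h.eq_of_walk hc (.cons hux (.cons hxy hyv.toWalk)) hr <| by simp [hx, hy]

end IsWeakColoring

end WeakColoring

section WeakColoringSeparable

theorem exists_bool_family_avoiding {β : Type*} (x : β) (P : β → Prop) :
    ∃ s : Bool → β, ∀ a b, P a → P b → a ≠ b → ∃ k, P (s k) ∧ a ≠ s k := by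
  by_cases hP : ∃ a b, P a ∧ P b ∧ a ≠ b
  · obtain ⟨a, b, ha, hb, hab⟩ := hP
    refine ⟨fun k => cond k a b, fun a' _ _ _ _ => ?_⟩
    by_cases h : a' = a
    · exact ⟨false, hb, h ▸ hab⟩
    · exact ⟨true, ha, h⟩
  · exact ⟨fun _ => x, fun a b ha hb hab => absurd ⟨a, b, ha, hb, hab⟩ hP⟩

variable {V α : Type*} [LinearOrder V] {G : SimpleGraph V} {c : V → α} {i j : α}

/-- The edges of `G` from a vertex of color `i` to a later vertex of color `j`. -/
def ColoredEdge (G : SimpleGraph V) (c : V → α) (i j : α) (u v : V) : Prop :=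
  c u = i ∧ c v = j ∧ u < v ∧ G.Adj u v

/-- `u` has a neighbor later than `u` in the order and outside the closed neighborhood of `v`. -/
def HasLaterPrivateNeighbor (G : SimpleGraph V) (u v : V) : Prop :=
  ∃ w, u < w ∧ G.Adj u w ∧ w ∉ closedNbr G v

/-- The relations into which the edges with distinct closed neighborhoods are split; `s` selects
for each vertex and each pair of colors two of its later neighbors. -/
def separatingRelation (G : SimpleGraph V) (c : V → α) (s : α × α → V → Bool → V) :
    α × α ⊕ α × α ⊕ (α × α) × Bool ⊕ α → V → V → Prop
  | .inl (i, j), u, v => ColoredEdge G c i j u v ∧ HasLaterPrivateNeighbor G v u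
  | .inr (.inl (i, j)), u, v => ColoredEdge G c i j u v ∧
      (∀ v', ColoredEdge G c i j u v' → v' = v) ∧ HasLaterPrivateNeighbor G u v
  | .inr (.inr (.inl ((i, j), b))), u, v => ColoredEdge G c i j u v ∧
      ColoredEdge G c i j u (s (i, j) u b) ∧ v ≠ s (i, j) u b
  | .inr (.inr (.inr l)), u, v => u < v ∧ G.Adj u v ∧ ¬ HasLaterPrivateNeighbor G v u ∧
      ¬ HasLaterPrivateNeighbor G u v ∧ ∃ x ∈ symmDiff (closedNbr G u) (closedNbr G v), c x = l

theorem exists_separatingRelation {s : α × α → V → Bool → V}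
    (hs : ∀ p u a b, ColoredEdge G c p.1 p.2 u a → ColoredEdge G c p.1 p.2 u b → a ≠ b →
      ∃ k, ColoredEdge G c p.1 p.2 u (s p u k) ∧ a ≠ s p u k)
    {u v : V} (hlt : u < v) (hadj : G.Adj u v) (hne : closedNbr G u ≠ closedNbr G v) :
    ∃ i, separatingRelation G c s i u v := by
  have huv : ColoredEdge G c (c u) (c v) u v := ⟨rfl, rfl, hlt, hadj⟩
  by_cases hright : HasLaterPrivateNeighbor G v u
  · exact ⟨.inl (c u, c v), huv, hright⟩
  by_cases hleft : HasLaterPrivateNeighbor G u v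
  · by_cases hv : ∀ v', ColoredEdge G c (c u) (c v) u v' → v' = v
    · exact ⟨.inr (.inl (c u, c v)), huv, hv, hleft⟩
    · push Not at hv
      obtain ⟨v', hv', hne'⟩ := hv
      obtain ⟨b, hb⟩ := hs (c u, c v) u v v' huv hv' hne'.symm
      exact ⟨.inr (.inr (.inl ((c u, c v), b))), huv, hb⟩
  · obtain ⟨x, hx⟩ := Set.nonempty_iff_ne_empty.mpr fun h => hne (symmDiff_eq_bot.mp h)
    exact ⟨.inr (.inr (.inr (c x))), hlt, hadj, hright, hleft, x, hx, rfl⟩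

variable [Fintype V]

namespace IsWeakColoring

theorem separable_of_laterPrivateNeighbor_right (h : IsWeakColoring G 3 c) (i j : α) :
    Separable G fun u v => ColoredEdge G c i j u v ∧ HasLaterPrivateNeighbor G v u := by
  intro q hq
  have : Fact (1 < q) := ⟨hq⟩
  let ι := {v // ∃ u, ColoredEdge G c i j u v ∧ HasLaterPrivateNeighbor G v u}
  choose U hU W hW using fun v : ι => v.2
  have htri (v v' : ι) (hv' : W v' ∈ symmDiff (closedNbr G (U v)) (closedNbr G v)) : v' ≤ v := by
    by_contra hle
    have hlt : (v : V) < v' := not_le.mp hle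
    obtain ⟨hcU, hcv, hUv, -⟩ := hU v
    obtain ⟨hcU', hcv', -, hadj'⟩ := hU v'
    obtain ⟨hvW, hadjW, hW'⟩ := hW v'
    have hvW' : (v : V) < W v' := hlt.trans hvW
    rcases hv' with ⟨hmem | hmem, -⟩ | ⟨hmem | hmem, -⟩
    · exact (hUv.trans hvW').ne' hmem
    · have hUU : U v = U v' := h.eq_of_adj_adj_adj le_rfl (hcU.trans hcU'.symm) hmem hadjW.symm
        hadj'.symm (hUv.trans hvW').le (hUv.trans hlt).le
      exact hW' (hUU ▸ Or.inr hmem)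
    · exact hvW'.ne' hmem
    · exact hlt.ne (h.eq_of_adj_adj (by norm_num) (hcv.trans hcv'.symm) hmem hadjW.symm
        hvW'.le)
  have hdiag (v : ι) : W v ∈ symmDiff (closedNbr G (U v)) (closedNbr G v) :=
    Or.inr ⟨Or.inr (hW v).2.1, (hW v).2.2⟩
  obtain ⟨f, -, hf⟩ := exists_sum_ne_sum_of_triangular (R := ZMod q) hdiag htri
  refine ⟨f, fun u v huv => ?_⟩
  let v' : ι := ⟨v, u, huv⟩
  have hUv : U v' = u := h.eq_of_adj_adj (by norm_num) ((hU v').1.trans huv.1.1.symm)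
    (hU v').2.2.2 huv.1.2.2.2.symm (hU v').2.2.1.le
  exact hUv ▸ hf v'

theorem separable_of_laterPrivateNeighbor_left (h : IsWeakColoring G 3 c) {E : V → V → Prop}
    {w : V → V} (hE : ∀ u v, E u v → c u = i ∧ u < v ∧ G.Adj u v)
    (hw : ∀ u v, E u v → u < w u ∧ G.Adj u (w u) ∧ w u ∉ closedNbr G v)
    (hw_iff : ∀ u v v' x y, E u v → E u v' → E x y →
      (w x ∈ closedNbr G v ↔ w x ∈ closedNbr G v')) :
    Separable G E := by
  intro q hq
  have : Fact (1 < q) := ⟨hq⟩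
  let ι := {u // ∃ v, E u v}
  choose v' hv' using fun u : ι => u.2
  have htri (u u' : ι) (hu' : w u' ∈ symmDiff (closedNbr G u) (closedNbr G (v' u))) :
      u' ≤ u := by
    by_contra hle
    have hlt : (u : V) < u' := not_le.mp hle
    obtain ⟨hcu, huv, hadj⟩ := hE _ _ (hv' u)
    obtain ⟨hcu', -, -⟩ := hE _ _ (hv' u')
    obtain ⟨huw, hadjw, -⟩ := hw _ _ (hv' u')
    have huw' : (u : V) < w u' := hlt.trans huw
    have hcc : c u = c u' := hcu.trans hcu'.symm
    refine hlt.ne ?_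
    rcases hu' with ⟨hmem | hmem, -⟩ | ⟨hmem | hmem, -⟩
    · exact absurd hmem huw'.ne'
    · exact h.eq_of_adj_adj (by norm_num) hcc hmem hadjw.symm huw'.le
    · exact h.eq_of_adj_adj (by norm_num) hcc (hmem ▸ hadj) hadjw.symm huw'.le
    · exact h.eq_of_adj_adj_adj le_rfl hcc hadj hmem hadjw.symm huv.le huw'.le
  obtain ⟨f, hf0, hf⟩ := exists_sum_ne_sum_of_triangular (R := ZMod q) (w := fun u : ι => w u)
    (fun u => Or.inl ⟨Or.inr (hw _ _ (hv' u)).2.1, (hw _ _ (hv' u)).2.2⟩) htri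
  refine ⟨f, fun u v huv => ?_⟩
  let u' : ι := ⟨u, v, huv⟩
  suffices ∑ x with x ∈ closedNbr G v, f x = ∑ x with x ∈ closedNbr G (v' u'), f x from
    this ▸ hf u'
  simp only [Finset.sum_filter]
  refine Finset.sum_congr rfl fun x _ => ?_
  by_cases hx : ∃ y : ι, w y = x
  · obtain ⟨⟨y, z, hyz⟩, rfl⟩ := hx
    simp only [hw_iff u v (v' u') y z huv (hv' u') hyz]
  · simp only [hf0 x hx, ite_self]

theorem separable_of_unique_later_neighbor (h : IsWeakColoring G 3 c) (i j : α) :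
    Separable G fun u v => ColoredEdge G c i j u v ∧ (∀ v', ColoredEdge G c i j u v' → v' = v) ∧
      HasLaterPrivateNeighbor G u v := by
  have hex (u : V) : ∃ w, ∀ v, ColoredEdge G c i j u v →
      (∀ v', ColoredEdge G c i j u v' → v' = v) → HasLaterPrivateNeighbor G u v →
      u < w ∧ G.Adj u w ∧ w ∉ closedNbr G v := by
    by_cases hu : ∃ v, ColoredEdge G c i j u v ∧ HasLaterPrivateNeighbor G u v
    · obtain ⟨v, hv, w, hw⟩ := hu
      exact ⟨w, fun v' _ hv' _ => hv' v hv ▸ hw⟩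
    · exact ⟨u, fun v hv _ hw => absurd ⟨v, hv, hw⟩ hu⟩
  choose w hw using hex
  refine h.separable_of_laterPrivateNeighbor_left (i := i) (w := w)
    (fun u v huv => ⟨huv.1.1, huv.1.2.2⟩) (fun u v huv => hw u v huv.1 huv.2.1 huv.2.2) ?_
  rintro u v v' x y ⟨hv, -⟩ ⟨-, hv', -⟩ -
  rw [hv' v hv]

theorem separable_of_ne_later_neighbor (h : IsWeakColoring G 3 c) (i j : α) (s : V → V) :
    Separable G fun u v =>
      ColoredEdge G c i j u v ∧ ColoredEdge G c i j u (s u) ∧ v ≠ s u := by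
  have hs {u v x y : V}
      (huv : ColoredEdge G c i j u v ∧ ColoredEdge G c i j u (s u) ∧ v ≠ s u)
      (hxy : ColoredEdge G c i j x y ∧ ColoredEdge G c i j x (s x) ∧ y ≠ s x) :
      s x ∉ closedNbr G v := by
    obtain ⟨⟨hcu, hcv, -, huv⟩, -, hne⟩ := huv
    obtain ⟨-, ⟨hcx, hcs, hlt, hadj⟩, -⟩ := hxy
    rintro (hmem | hmem)
    · have hxu : x = u := h.eq_of_adj_adj (by norm_num) (hcx.trans hcu.symm) hadj
        (hmem ▸ huv.symm) hlt.le
      exact hne (hxu ▸ hmem.symm)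
    · exact h.ne_of_adj (by norm_num) hmem (hcv.trans hcs.symm)
  exact h.separable_of_laterPrivateNeighbor_left (i := i) (w := s)
    (fun u v huv => ⟨huv.1.1, huv.1.2.2⟩)
    (fun u v huv => ⟨huv.2.1.2.2.1, huv.2.1.2.2.2, hs huv huv⟩)
    (fun u v v' x y huv huv' hxy => iff_of_false (hs huv hxy) (hs huv' hxy))

theorem separable_of_earlier_neighbor (h : IsWeakColoring G 3 c) (l : α) :
    Separable G fun u v => u < v ∧ G.Adj u v ∧ ¬ HasLaterPrivateNeighbor G v u ∧
      ¬ HasLaterPrivateNeighbor G u v ∧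
      ∃ x ∈ symmDiff (closedNbr G u) (closedNbr G v), c x = l := by
  intro q hq
  have : Fact (1 < q) := ⟨hq⟩
  refine ⟨fun x => if c x = l then 1 else 0, ?_⟩
  rintro u v ⟨hlt, hadj, hv, hu, x, hx, hcx⟩
  refine sum_ne_sum_of_symmDiff hx (by simp [hcx]) fun y hy hyx => if_neg fun hcy => hyx ?_
  have earlier {a b z : V} (hab : G.Adj a b) (ha : ¬ HasLaterPrivateNeighbor G a b)
      (hza : z ∈ closedNbr G a) (hzb : z ∉ closedNbr G b) : G.Adj z a ∧ z < a := by
    rcases hza with rfl | hza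
    · exact absurd (Or.inr hab.symm) hzb
    · exact ⟨hza.symm, (lt_or_gt_of_ne hza.ne').resolve_right fun hlt => ha ⟨z, hlt, hza, hzb⟩⟩
  have left_earlier {z : V} := earlier (z := z) hadj hu
  have right_earlier {z : V} := earlier (z := z) hadj.symm hv
  have hcc : c y = c x := hcy.trans hcx.symm
  rcases hx with ⟨hxu, hxv⟩ | ⟨hxv, hxu⟩ <;> rcases hy with ⟨hyu, hyv⟩ | ⟨hyv, hyu⟩
  · obtain ⟨hyu, hlt⟩ := left_earlier hyu hyv
    exact h.eq_of_adj_adj (by norm_num) hcc hyu (left_earlier hxu hxv).1.symm hlt.le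
  · obtain ⟨hxu, hlt'⟩ := left_earlier hxu hxv
    exact (h.eq_of_adj_adj_adj le_rfl hcc.symm hxu hadj (right_earlier hyv hyu).1.symm hlt'.le
      (hlt'.trans hlt).le).symm
  · obtain ⟨hyu, hlt'⟩ := left_earlier hyu hyv
    exact h.eq_of_adj_adj_adj le_rfl hcc hyu hadj (right_earlier hxv hxu).1.symm hlt'.le
      (hlt'.trans hlt).le
  · obtain ⟨hyv, hlt⟩ := right_earlier hyv hyu
    exact h.eq_of_adj_adj (by norm_num) hcc hyv (right_earlier hxv hxu).1.symm hlt.le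

theorem separable_separatingRelation (h : IsWeakColoring G 3 c) (s : α × α → V → Bool → V) (i) :
    Separable G (separatingRelation G c s i) := by
  rcases i with p | p | p | l
  · exact h.separable_of_laterPrivateNeighbor_right p.1 p.2
  · exact h.separable_of_unique_later_neighbor p.1 p.2
  · exact h.separable_of_ne_later_neighbor p.1.1 p.1.2 fun u => s p.1 u p.2
  · exact h.separable_of_earlier_neighbor l

theorem disNumber_le (h : IsWeakColoring G 3 c) [Fintype α] :
    disNumber G ≤ ∏ k : Fin (4 * Fintype.card α ^ 2 + Fintype.card α), Nat.nth Nat.Prime k := by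
  choose s hs using fun (p : α × α) (u : V) =>
    exists_bool_family_avoiding u (ColoredEdge G c p.1 p.2 u)
  have hcard : Fintype.card (α × α ⊕ α × α ⊕ (α × α) × Bool ⊕ α) =
      4 * Fintype.card α ^ 2 + Fintype.card α := by
    simp only [Fintype.card_sum, Fintype.card_prod, Fintype.card_bool]
    ring
  rw [← hcard]
  refine disNumber_le_of_separable (h.separable_separatingRelation s) fun u v hadj hne => ?_
  rcases hadj.ne.lt_or_gt with hlt | hlt
  · exact (exists_separatingRelation hs hlt hadj hne).imp fun _ => Or.inl
  · exact (exists_separatingRelation hs hlt hadj.symm hne.symm).imp fun _ => Or.inr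

end IsWeakColoring

end WeakColoringSeparable

/-! ### Greedy colorings, orderings and counting -/

section Greedy

variable {V : Type*} [LinearOrder V] [Fintype V]

theorem exists_coloring_of_card_le {R : V → V → Prop} {k : ℕ}
    (hR : ∀ v, ({x | x < v ∧ R v x} : Finset V).card ≤ k) :
    ∃ c : V → Fin (k + 1), ∀ v x, x < v → R v x → c x ≠ c v := by
  let F (v : V) (ih : ∀ x, x < v → Fin (k + 1)) : Fin (k + 1) :=
    if h : ∃ a, ∀ x (hx : x < v), R v x → ih x hx ≠ a then h.choose else 0
  let c : V → Fin (k + 1) := wellFounded_lt.fix F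
  have hc (v : V) : c v = F v fun x _ => c x := wellFounded_lt.fix_eq F v
  have hfree (v : V) : ∃ a, ∀ x, x < v → R v x → c x ≠ a := by
    obtain ⟨a, -, ha⟩ := Finset.exists_mem_notMem_of_card_lt_card
      (s := ({x | x < v ∧ R v x} : Finset V).image c) (t := Finset.univ)
      ((Finset.card_image_le.trans (hR v)).trans_lt (by simp))
    exact ⟨a, fun x hx hxv h => ha (Finset.mem_image.mpr ⟨x, by simp [hx, hxv], h⟩)⟩
  refine ⟨c, fun v => ?_⟩
  rw [hc v]
  simp only [F, dif_pos (hfree v)]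
  exact (hfree v).choose_spec

theorem exists_isWeakColoring {G : SimpleGraph V} {r k : ℕ}
    (hG : ∀ v, ({x | x ≠ v ∧ WeaklyReachable G r v x} : Finset V).card ≤ k) :
    ∃ c : V → Fin (k + 1), IsWeakColoring G r c := by
  obtain ⟨c, hc⟩ := exists_coloring_of_card_le (R := WeaklyReachable G r) fun v =>
    (Finset.card_le_card (Finset.monotone_filter_right _ fun _ _ hx => ⟨hx.1.ne, hx.2⟩)).trans
      (hG v)
  refine ⟨c, fun u v huv hreach => by_contra fun hne => ?_⟩
  obtain ⟨p, -, hp⟩ := id hreach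
  exact hc v u ((hp v p.start_mem_support).lt_of_ne hne) hreach huv

end Greedy

section Ordering

variable {V : Type*}

theorem injOn_update_of_lt {S : Finset V} {ρ : V → ℕ} {v : V} {n : ℕ}
    (hinj : Set.InjOn ρ (S.erase v)) (hlt : ∀ x ∈ S.erase v, ρ x < n) :
    Set.InjOn (Function.update ρ v n) S := by
  have hne {x : V} (hx : x ∈ S) (hxv : x ≠ v) : ρ x ≠ n :=
    (hlt x (Finset.mem_erase.mpr ⟨hxv, hx⟩)).ne
  intro x hx y hy hxy
  by_cases hxv : x = v <;> by_cases hyv : y = v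
  · rw [hxv, hyv]
  · exact absurd (by simpa [hxv, hyv] using hxy.symm) (hne hy hyv)
  · exact absurd (by simpa [hxv, hyv] using hxy) (hne hx hxv)
  · exact hinj (by simp_all) (by simp_all) (by simpa [hxv, hyv] using hxy)

theorem exists_rank_of_step {P : Finset V → V → Prop}
    (hstep : ∀ S : Finset V, S.Nonempty → (∀ t ∉ S, ∃ S', S ⊆ S' ∧ P S' t) → ∃ v ∈ S, P S v)
    (n : ℕ) (S : Finset V) (hn : S.card = n) (hS : ∀ t ∉ S, ∃ S', S ⊆ S' ∧ P S' t) :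
    ∃ ρ : V → ℕ, Set.InjOn ρ S ∧ (∀ x ∈ S, ρ x < n) ∧ ∀ v ∈ S, P {x ∈ S | ρ x ≤ ρ v} v := by
  induction n generalizing S with
  | zero =>
    obtain rfl := Finset.card_eq_zero.mp hn
    exact ⟨0, by simp⟩
  | succ n ih =>
    obtain ⟨v, hvS, hv⟩ := hstep S (Finset.card_pos.mp (by lia)) hS
    obtain ⟨ρ, hinj, hlt, hP⟩ := ih (S.erase v) (by rw [Finset.card_erase_of_mem hvS, hn]; rfl)
      fun t ht => by
        rcases eq_or_ne t v with rfl | htv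
        · exact ⟨S, Finset.erase_subset _ _, hv⟩
        · obtain ⟨S', hS', hP⟩ := hS t fun h => ht (Finset.mem_erase.mpr ⟨htv, h⟩)
          exact ⟨S', (Finset.erase_subset _ _).trans hS', hP⟩
    have hlt' {x : V} (hx : x ∈ S) (hxv : x ≠ v) : ρ x < n :=
      hlt x (Finset.mem_erase.mpr ⟨hxv, hx⟩)
    refine ⟨Function.update ρ v n, injOn_update_of_lt hinj hlt, fun x hx => ?_, fun x hx => ?_⟩
    · by_cases hxv : x = v
      · simp [hxv]
      · simpa [hxv] using (hlt' hx hxv).trans n.lt_succ_self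
    · by_cases hxv : x = v
      · convert hv using 1
        ext y
        by_cases hyv : y = v
        · simp [hyv, hxv, hvS]
        · simpa [hyv, hxv] using fun hy => (hlt' hy hyv).le
      · convert hP x (by simp_all) using 1
        ext y
        by_cases hyv : y = v
        · simp [hyv, hxv, hlt' hx hxv]
        · simp [hyv, hxv]

theorem exists_linearOrder_of_step [Fintype V] {P : Finset V → V → Prop}
    (hstep : ∀ S : Finset V, S.Nonempty → (∀ t ∉ S, ∃ S', S ⊆ S' ∧ P S' t) → ∃ v ∈ S, P S v) :
    ∃ _ : LinearOrder V, ∀ v, P {x | x ≤ v} v := by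
  obtain ⟨ρ, hinj, -, hρ⟩ := exists_rank_of_step hstep _ Finset.univ rfl (by simp)
  let : LinearOrder V := LinearOrder.lift' ρ fun x y => hinj (by simp) (by simp)
  refine ⟨this, fun v => ?_⟩
  convert hρ v (Finset.mem_univ v) using 2
  exact Iff.rfl

end Ordering

section Counting

variable {V β : Type*}

theorem card_le_of_bounded_overlap {P : Finset β} {I : β → Finset V} {m Q N : ℕ}
    (hI : ∀ p ∈ P, (I p).card ≤ m) (hQ : ∀ t, (P.filter fun p => t ∈ I p).card ≤ Q)
    (hN : ∀ M ⊆ P, (M : Set β).PairwiseDisjoint I → M.card ≤ N) :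
    P.card ≤ N * (1 + m * Q) := by
  obtain ⟨M, hM⟩ := Finset.exists_maximal
    (s := P.powerset.filter fun M : Finset β => (M : Set β).PairwiseDisjoint I) ⟨∅, by simp⟩
  simp only [Maximal, Finset.mem_filter, Finset.mem_powerset] at hM
  obtain ⟨⟨hMP, hdisj⟩, hmax⟩ := hM
  have hcover : P ⊆ M.biUnion fun p => insert p ((I p).biUnion fun t => {q ∈ P | t ∈ I q}) := by
    intro q hq
    by_contra hqM
    simp only [Finset.mem_biUnion, Finset.mem_insert, Finset.mem_filter, not_exists, not_and,
      not_or] at hqM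
    have hins : (insert q M : Set β).PairwiseDisjoint I :=
      hdisj.insert fun p hp _ => Finset.disjoint_left.mpr fun t htq htp =>
        (hqM p hp).2 t htp hq htq
    have hqM' : q ∈ M := hmax ⟨Finset.insert_subset hq hMP, by simpa using hins⟩
      (Finset.subset_insert _ _) (Finset.mem_insert_self _ _)
    exact (hqM q hqM').1 rfl
  refine (Finset.card_le_card hcover).trans ((Finset.card_biUnion_le_card_mul _ _ (1 + m * Q)
    fun p hp => ?_).trans (Nat.mul_le_mul_right _ (hN M hMP hdisj)))
  refine (Finset.card_insert_le _ _).trans ?_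
  rw [add_comm]
  exact Nat.add_le_add_left ((Finset.card_biUnion_le_card_mul _ _ Q fun t _ => hQ t).trans
    (Nat.mul_le_mul_right _ (hI p (hMP hp)))) _

/-- For a single `i`, fewer than a fraction `1 / |T|` of the points exceed `|T|` times the
average. -/
theorem exists_forall_le_card_mul_of_sum_le {S : Finset V} (hS : S.Nonempty) {T : Finset β}
    {N : β → V → ℕ} {C : β → ℕ} (hN : ∀ i ∈ T, ∑ v ∈ S, N i v ≤ C i * S.card) :
    ∃ v ∈ S, ∀ i ∈ T, N i v ≤ T.card * C i := by
  by_contra! hbad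
  have hfew : ∀ i ∈ T, {v ∈ S | T.card * C i < N i v}.card * T.card < S.card := by
    intro i hi
    have hsum : {v ∈ S | T.card * C i < N i v}.card * (T.card * C i + 1) ≤ C i * S.card := by
      refine le_trans ?_ ((Finset.sum_le_sum_of_subset
        (Finset.filter_subset (fun v => T.card * C i < N i v) S)).trans (hN i hi))
      rw [← smul_eq_mul]
      exact Finset.card_nsmul_le_sum _ _ _ fun v hv => Nat.succ_le_of_lt (Finset.mem_filter.mp hv).2
    by_contra! hle
    have := Nat.mul_le_mul_left (C i) hle
    have hzero : {v ∈ S | T.card * C i < N i v}.card = 0 := by nlinarith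
    rw [hzero, zero_mul] at hle
    exact hS.card_pos.not_ge hle
  have hcover : S ⊆ T.biUnion fun i => {v ∈ S | T.card * C i < N i v} := fun v hv => by
    obtain ⟨i, hi, hlt⟩ := hbad v hv
    exact Finset.mem_biUnion.mpr ⟨i, hi, Finset.mem_filter.mpr ⟨hv, hlt⟩⟩
  have hT : T.Nonempty := by
    obtain ⟨v, hv⟩ := hS
    obtain ⟨i, hi, -⟩ := hbad v hv
    exact ⟨i, hi⟩
  have hlt : S.card * T.card < T.card * S.card :=
    calc S.card * T.card
        ≤ (∑ i ∈ T, {v ∈ S | T.card * C i < N i v}.card) * T.card :=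
          Nat.mul_le_mul_right _ ((Finset.card_le_card hcover).trans Finset.card_biUnion_le)
      _ = ∑ i ∈ T, {v ∈ S | T.card * C i < N i v}.card * T.card := Finset.sum_mul _ _ _
      _ < ∑ _i ∈ T, S.card := Finset.sum_lt_sum_of_nonempty hT hfew
      _ = T.card * S.card := by rw [Finset.sum_const, smul_eq_mul]
  exact hlt.ne (mul_comm _ _)

end Counting

/-! ### Shallow minors and short links -/

section ShallowDensity

variable {V W W' : Type*} {G : SimpleGraph V} {H : SimpleGraph W} {H' : SimpleGraph W'} {d e a : ℕ}

/-- The *shallow density* of `G` at depth `d` is at most `a`: every `d`-shallow minor of `G` has at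
most `a` times as many edges as vertices. -/
def ShallowDensityLE (G : SimpleGraph V) (d a : ℕ) : Prop :=
  ∀ (m : ℕ) (H : SimpleGraph (Fin m)), IsShallowMinor d H G → H.edgeSet.ncard ≤ a * m

theorem IsShallowMinor.mono (h : IsShallowMinor d H G) (hde : d ≤ e) : IsShallowMinor e H G := by
  obtain ⟨B, hB, hrad, hadj⟩ := h
  exact ⟨B, hB, fun v => (hrad v).imp fun c hc y => ⟨(hc y).1, (hc y).2.trans hde⟩, hadj⟩

theorem IsShallowMinor.of_iso (h : IsShallowMinor d H G) (φ : H' ≃g H) :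
    IsShallowMinor d H' G := by
  obtain ⟨B, hB, hrad, hadj⟩ := h
  exact ⟨B ∘ φ, hB.comp_of_injective φ.injective, fun v => hrad (φ v),
    fun u v huv => hadj _ _ (φ.map_adj_iff.mpr huv)⟩

theorem ShallowDensityLE.anti (h : ShallowDensityLE G e a) (hde : d ≤ e) :
    ShallowDensityLE G d a :=
  fun m H hH => h m H (hH.mono hde)

theorem ShallowDensityLE.ncard_edgeSet_le [Fintype W] (h : ShallowDensityLE G d a)
    (hH : IsShallowMinor d H G) : H.edgeSet.ncard ≤ a * Fintype.card W := by
  have φ := H.overFinIso rfl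
  rw [← Nat.card_coe_set_eq, Nat.card_congr φ.mapEdgeSet, Nat.card_coe_set_eq]
  exact h _ _ (hH.of_iso φ.symm)

end ShallowDensity

section Links

variable {V : Type*} {G : SimpleGraph V} {S I : Finset V} {r : ℕ} {u v t : V}

/-- `I` is the set of inner vertices of a path of length at most `r` from `u` to `v`, and it avoids
`S`. -/
def IsLink (G : SimpleGraph V) (S : Finset V) (r : ℕ) (u v : V) (I : Finset V) : Prop :=
  ∃ p : G.Walk u v, p.IsPath ∧ p.length ≤ r ∧ p.support.toFinset \ {u, v} = I ∧ Disjoint I S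

namespace IsLink

theorem symm (h : IsLink G S r u v I) : IsLink G S r v u I := by
  obtain ⟨p, hp, hlen, rfl, hdisj⟩ := h
  refine ⟨p.reverse, hp.reverse, by rwa [SimpleGraph.Walk.length_reverse], ?_, hdisj⟩
  rw [SimpleGraph.Walk.support_reverse, List.toFinset_reverse, Finset.pair_comm]

theorem card_le (h : IsLink G S r u v I) : I.card ≤ r + 1 := by
  obtain ⟨p, -, hlen, rfl, -⟩ := h
  refine (Finset.card_le_card Finset.sdiff_subset).trans ((List.toFinset_card_le _).trans ?_)
  rw [SimpleGraph.Walk.length_support]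
  exact Nat.succ_le_succ hlen

theorem disjoint (h : IsLink G S r u v I) : Disjoint I S :=
  h.elim fun _ hp => hp.2.2.2

theorem exists_walk_of_mem (h : IsLink G S r u v I) (ht : t ∈ I) :
    ∃ p : G.Walk u t, p.length < r ∧ ∀ z ∈ p.support, z ∈ insert u I := by
  obtain ⟨p, hp, hlen, rfl, -⟩ := h
  obtain ⟨htp, htuv⟩ := Finset.mem_sdiff.mp ht
  rw [List.mem_toFinset] at htp
  have htv : t ≠ v := fun h => htuv (by simp [h])
  refine ⟨p.takeUntil t htp, (p.length_takeUntil_lt_length htp htv).trans_le hlen, fun z hz => ?_⟩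
  have hzv : z ≠ v := by
    rintro rfl
    exact SimpleGraph.Walk.endpoint_notMem_support_takeUntil hp htp htv.symm hz
  have hzp : z ∈ p.support := p.support_takeUntil_subset_support htp hz
  by_cases hzu : z = u <;> simp [hzu, hzv, hzp]

theorem exists_adj (h : IsLink G S r u v I) (huv : u ≠ v) : ∃ t ∈ insert u I, G.Adj t v := by
  obtain ⟨p, -, -, rfl, -⟩ := h
  have hnil : ¬ p.Nil := fun hnil => huv hnil.eq
  have hadj : G.Adj p.penultimate v := p.adj_penultimate hnil
  refine ⟨p.penultimate, ?_, hadj⟩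
  have hmem : p.penultimate ∈ p.support := p.getVert_mem_support _
  by_cases hpu : p.penultimate = u <;> simp [hpu, hmem, hadj.ne]

end IsLink

/-- The vertices of `S`, other than `v` itself, joined to `v` by a path of length at most `r` with
no inner vertex in `S`. If `S` consists of `v` and the vertices before it in an order, these are the
vertices that are strongly `r`-reachable from `v`. -/
noncomputable def linkedSet (G : SimpleGraph V) (S : Finset V) (r : ℕ) (v : V) : Finset V :=
  {x ∈ S | x ≠ v ∧ ∃ I, IsLink G S r v x I}

theorem mem_linkedSet : u ∈ linkedSet G S r v ↔ u ∈ S ∧ u ≠ v ∧ ∃ I, IsLink G S r v u I := by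
  rw [linkedSet, Finset.mem_filter]

theorem linkedSet_zero : linkedSet G S 0 v = ∅ := by
  refine Finset.eq_empty_of_forall_notMem fun x hx => ?_
  obtain ⟨-, hxv, I, p, -, hlen, -⟩ := mem_linkedSet.mp hx
  exact hxv (SimpleGraph.Walk.eq_of_length_eq_zero (Nat.le_zero.mp hlen)).symm

theorem exists_append_of_mem {A : Set V} (p : G.Walk u v) (hv : v ∈ A) :
    ∃ y ∈ A, ∃ (q : G.Walk u y) (q' : G.Walk y v), p = q.append q' ∧
      ∀ z ∈ q.support, z ∈ A → z = y := by
  induction p with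
  | nil => exact ⟨_, hv, .nil, .nil, rfl, by simp⟩
  | @cons u w v h p ih =>
    by_cases hu : u ∈ A
    · exact ⟨u, hu, .nil, .cons h p, rfl, by simp⟩
    · obtain ⟨y, hy, q, q', rfl, hq⟩ := ih hv
      refine ⟨y, hy, .cons h q, q', rfl, fun z hz hzA => ?_⟩
      rw [SimpleGraph.Walk.support_cons, List.mem_cons] at hz
      rcases hz with rfl | hz
      · exact absurd hzA hu
      · exact hq z hz hzA

end Links

section Descent

variable {V : Type*} [Fintype V] {G : SimpleGraph V} {σ : V → Finset V} {r s k : ℕ} {t : V}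

/-- The vertices `x ≠ t` reached from `t` by a walk of length at most `s` such that `x` belongs to
the set `σ z` of every other vertex `z` of the walk. For `σ z = {x | x ≤ z}` this is weak
reachability. -/
noncomputable def descentSet (G : SimpleGraph V) (σ : V → Finset V) (s : ℕ) (t : V) : Finset V :=
  {x | x ≠ t ∧ ∃ p : G.Walk t x, p.length ≤ s ∧ ∀ z ∈ p.support, z ≠ x → x ∈ σ z}

theorem mem_descentSet {x : V} : x ∈ descentSet G σ s t ↔
    x ≠ t ∧ ∃ p : G.Walk t x, p.length ≤ s ∧ ∀ z ∈ p.support, z ≠ x → x ∈ σ z := by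
  rw [descentSet, Finset.mem_filter_univ]

theorem descentSet_succ_subset (hs : s < r) :
    descentSet G σ (s + 1) t ⊆
      (linkedSet G (σ t) r t).biUnion fun y => insert y (descentSet G σ s y) := by
  intro x hx
  obtain ⟨hxt, p, hlen, hp⟩ := mem_descentSet.mp hx
  have hxA : x ∈ (σ t : Set V) \ {t} := ⟨hp t p.start_mem_support hxt.symm, hxt⟩
  obtain ⟨y, ⟨hyσ, hyt⟩, q, q', hqq, hq⟩ := exists_append_of_mem p.bypass hxA
  have hpath : (q.append q').IsPath := hqq ▸ p.bypass_isPath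
  have hlen' : q.length + q'.length ≤ s + 1 := by
    rw [← SimpleGraph.Walk.length_append, ← hqq]
    exact p.length_bypass_le_length.trans hlen
  have hq_pos : 0 < q.length :=
    Nat.pos_of_ne_zero fun h => hyt (SimpleGraph.Walk.eq_of_length_eq_zero h).symm
  have hlink : IsLink G (σ t) r t y (q.support.toFinset \ {t, y}) := by
    refine ⟨q, hpath.of_append_left, by lia, rfl, Finset.disjoint_left.mpr fun z hz hzσ => ?_⟩
    simp only [Finset.mem_sdiff, List.mem_toFinset, Finset.mem_insert, Finset.mem_singleton,
      not_or] at hz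
    exact hz.2.2 (hq z hz.1 ⟨hzσ, hz.2.1⟩)
  refine Finset.mem_biUnion.mpr ⟨y, mem_linkedSet.mpr ⟨hyσ, hyt, _, hlink⟩, ?_⟩
  by_cases hxy : x = y
  · exact Finset.mem_insert.mpr (.inl hxy)
  · refine Finset.mem_insert_of_mem (mem_descentSet.mpr ⟨hxy, q', by lia,
      fun z hz => hp z (p.support_bypass_subset_support ?_)⟩)
    rw [hqq, SimpleGraph.Walk.mem_support_append_iff]
    exact .inr hz

theorem card_descentSet_lt (hσ : ∀ t, (linkedSet G (σ t) r t).card ≤ k) (hs : s ≤ r) (t : V) :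
    (descentSet G σ s t).card < (k + 1) ^ s := by
  induction s generalizing t with
  | zero =>
    suffices descentSet G σ 0 t = ∅ by simp [this]
    refine Finset.eq_empty_of_forall_notMem fun x hx => ?_
    obtain ⟨hxt, p, hlen, -⟩ := mem_descentSet.mp hx
    exact hxt (SimpleGraph.Walk.eq_of_length_eq_zero (Nat.le_zero.mp hlen)).symm
  | succ s ih =>
    calc (descentSet G σ (s + 1) t).card
        ≤ (linkedSet G (σ t) r t).card * (k + 1) ^ s :=
          (Finset.card_le_card (descentSet_succ_subset hs)).trans
            (Finset.card_biUnion_le_card_mul _ _ _ fun y _ =>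
              (Finset.card_insert_le _ _).trans (ih (Nat.le_of_succ_le hs) y))
      _ ≤ k * (k + 1) ^ s := Nat.mul_le_mul_right _ (hσ t)
      _ < (k + 1) ^ (s + 1) := by
          rw [pow_succ']
          exact Nat.mul_lt_mul_of_pos_right k.lt_succ_self (by positivity)

theorem card_weaklyReachable_le [LinearOrder V]
    (h : ∀ v, (linkedSet G ({x | x ≤ v} : Finset V) r v).card ≤ k) (v : V) :
    ({x | x ≠ v ∧ WeaklyReachable G r v x} : Finset V).card ≤ (k + 1) ^ r := by
  refine (Finset.card_le_card ?_).trans (card_descentSet_lt h le_rfl v).le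
  intro x hx
  obtain ⟨hxv, p, hlen, hp⟩ := (Finset.mem_filter_univ x).mp hx
  exact mem_descentSet.mpr ⟨hxv, p, hlen, fun z hz _ => by simpa using hp z hz⟩

end Descent

section LinkedPairs

variable {V : Type*} {G : SimpleGraph V} {S : Finset V} {M P : Finset (V × V)}
  {I : V × V → Finset V} {r d a k : ℕ}

/-- The graph on `S` whose edges are the pairs of distinct elements listed in `M`. -/
def pairGraph (S : Finset V) (M : Finset (V × V)) : SimpleGraph S :=
  SimpleGraph.fromRel fun x y => ((x : V), (y : V)) ∈ M

/-- The branch set of `x`: `x` together with the inner vertices of all links leaving `x`. -/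
def linkBranch (M : Finset (V × V)) (I : V × V → Finset V) (x : V) : Set V :=
  insert x {t | ∃ p ∈ M, p.1 = x ∧ t ∈ I p}

theorem pairwise_disjoint_linkBranch (hI : ∀ p ∈ M, IsLink G S r p.1 p.2 (I p))
    (hdisj : (M : Set (V × V)).PairwiseDisjoint I) :
    Pairwise (Disjoint on fun x : S => linkBranch M I x) := by
  intro x y hxy
  have hS {z : S} {p : V × V} (hp : p ∈ M) : (z : V) ∉ I p := fun hz =>
    Finset.disjoint_left.mp (hI p hp).disjoint hz z.2
  refine Set.disjoint_left.mpr ?_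
  rintro t (rfl | ⟨p, hp, hpx, htp⟩) (hty | ⟨q, hq, hqy, htq⟩)
  · exact hxy (Subtype.ext hty)
  · exact hS hq htq
  · exact hS hp (hty ▸ htp)
  · refine Finset.disjoint_left.mp (hdisj hp hq fun hpq => hxy (Subtype.ext ?_)) htp htq
    rw [← hpx, ← hqy, hpq]

theorem insert_subset_linkBranch {p : V × V} (hp : p ∈ M) :
    (insert p.1 (I p) : Set V) ⊆ linkBranch M I p.1 :=
  Set.insert_subset_insert fun _ ht => ⟨p, hp, rfl, ht⟩

theorem isShallowMinor_pairGraph (hM : ∀ p ∈ M, p.1 ≠ p.2)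
    (hI : ∀ p ∈ M, IsLink G S (d + 1) p.1 p.2 (I p))
    (hdisj : (M : Set (V × V)).PairwiseDisjoint I) :
    IsShallowMinor d (pairGraph S M) G := by
  refine ⟨fun x => linkBranch M I x, pairwise_disjoint_linkBranch hI hdisj,
    fun x => ⟨⟨x, .inl rfl⟩, ?_⟩, fun x y hxy => ?_⟩
  · rintro ⟨t, ht⟩
    suffices ∃ p : G.Walk x t, p.length ≤ d ∧ ∀ z ∈ p.support, z ∈ linkBranch M I x by
      obtain ⟨p, hlen, hp⟩ := this
      have hlen' : (p.induce _ hp).length ≤ d := by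
        rwa [← SimpleGraph.Walk.length_map, SimpleGraph.Walk.map_induce]
      exact ⟨(p.induce _ hp).reachable, (SimpleGraph.dist_le _).trans hlen'⟩
    rcases ht with rfl | ⟨p, hp, hpx, ht⟩
    · exact ⟨.nil, Nat.zero_le _, by simp [linkBranch]⟩
    · obtain ⟨q, hlen, hq⟩ := (hI p hp).exists_walk_of_mem ht
      rw [← hpx]
      exact ⟨q, Nat.le_of_lt_succ hlen, fun z hz =>
        insert_subset_linkBranch hp (by simpa using hq z hz)⟩
  · have hex {x y : V} (hp : (x, y) ∈ M) : ∃ t ∈ linkBranch M I x, G.Adj t y := by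
      obtain ⟨t, ht, hadj⟩ := (hI _ hp).exists_adj (hM _ hp)
      exact ⟨t, insert_subset_linkBranch hp (by simpa using ht), hadj⟩
    obtain ⟨-, hp | hp⟩ := (SimpleGraph.fromRel_adj _ _ _).mp hxy
    · obtain ⟨t, ht, hadj⟩ := hex hp
      exact ⟨t, ht, y, .inl rfl, hadj⟩
    · obtain ⟨t, ht, hadj⟩ := hex hp
      exact ⟨x, .inl rfl, t, ht, hadj.symm⟩

theorem card_le_two_mul_ncard_edgeSet_pairGraph (hMS : M ⊆ S ×ˢ S) (hM : ∀ p ∈ M, p.1 ≠ p.2) :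
    M.card ≤ 2 * (pairGraph S M).edgeSet.ncard := by
  have hsub : M ⊆ (Finset.univ : Finset (pairGraph S M).Dart).image
      fun e => ((e.fst : V), (e.snd : V)) := by
    intro p hp
    obtain ⟨h1, h2⟩ := Finset.mem_product.mp (hMS hp)
    have hadj : (pairGraph S M).Adj ⟨p.1, h1⟩ ⟨p.2, h2⟩ :=
      (SimpleGraph.fromRel_adj _ _ _).mpr ⟨fun h => hM p hp (congrArg Subtype.val h), .inl hp⟩
    exact Finset.mem_image.mpr ⟨⟨(_, _), hadj⟩, Finset.mem_univ _, rfl⟩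
  calc M.card ≤ Fintype.card (pairGraph S M).Dart :=
        (Finset.card_le_card hsub).trans Finset.card_image_le
    _ = 2 * (pairGraph S M).edgeFinset.card := (pairGraph S M).dart_card_eq_twice_card_edges
    _ = 2 * (pairGraph S M).edgeSet.ncard := by
        rw [← SimpleGraph.coe_edgeFinset, Set.ncard_coe_finset]

theorem card_le_of_pairwiseDisjoint_links (hG : ShallowDensityLE G d a) (hMS : M ⊆ S ×ˢ S)
    (hM : ∀ p ∈ M, p.1 ≠ p.2) (hI : ∀ p ∈ M, IsLink G S (d + 1) p.1 p.2 (I p))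
    (hdisj : (M : Set (V × V)).PairwiseDisjoint I) : M.card ≤ 2 * (a * S.card) := by
  refine (card_le_two_mul_ncard_edgeSet_pairGraph hMS hM).trans (Nat.mul_le_mul_left _ ?_)
  simpa using hG.ncard_edgeSet_le (isShallowMinor_pairGraph hM hI hdisj)

/-- Along a link that avoids `S`, every inner vertex descends to both ends. -/
theorem card_filter_mem_link_le [Finite V]
    (hS : ∀ t ∉ S, ∃ S', S ⊆ S' ∧ (linkedSet G S' r t).card ≤ k) (hP : P ⊆ S ×ˢ S)
    (hI : ∀ p ∈ P, IsLink G S (r + 1) p.1 p.2 (I p)) (t : V) :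
    (P.filter fun p => t ∈ I p).card ≤ ((k + 1) ^ r) ^ 2 := by
  have := Fintype.ofFinite V
  have hex (t : V) : ∃ S', (t ∉ S → S ⊆ S') ∧ (linkedSet G S' r t).card ≤ k := by
    by_cases ht : t ∈ S
    · exact ⟨∅, fun h => absurd ht h, by simp [linkedSet]⟩
    · exact (hS t ht).imp fun S' hS' => ⟨fun _ => hS'.1, hS'.2⟩
  choose σ hσS hσ using hex
  have hmem {u v : V} {J : Finset V} (hu : u ∈ S) (hJ : IsLink G S (r + 1) u v J) (ht : t ∈ J) :
      u ∈ descentSet G σ r t := by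
    have hJS {z : V} (hz : z ∈ J) : z ∉ S := Finset.disjoint_left.mp hJ.disjoint hz
    obtain ⟨p, hlen, hp⟩ := hJ.exists_walk_of_mem ht
    refine mem_descentSet.mpr ⟨?_, p.reverse, ?_, fun z hz hzu => ?_⟩
    · rintro rfl
      exact hJS ht hu
    · rw [SimpleGraph.Walk.length_reverse]
      exact Nat.le_of_lt_succ hlen
    · have hz' := hp z (by simpa using hz)
      exact hσS z (hJS ((Finset.mem_insert.mp hz').resolve_left hzu)) hu
  have hsub : (P.filter fun p => t ∈ I p) ⊆ descentSet G σ r t ×ˢ descentSet G σ r t := by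
    intro p hp
    obtain ⟨hpP, ht⟩ := Finset.mem_filter.mp hp
    obtain ⟨h1, h2⟩ := Finset.mem_product.mp (hP hpP)
    exact Finset.mem_product.mpr ⟨hmem h1 (hI p hpP) ht, hmem h2 (hI p hpP).symm ht⟩
  have hcard := (card_descentSet_lt hσ le_rfl t).le
  calc _ ≤ (descentSet G σ r t ×ˢ descentSet G σ r t).card := Finset.card_le_card hsub
    _ = (descentSet G σ r t).card ^ 2 := by rw [Finset.card_product, sq]
    _ ≤ ((k + 1) ^ r) ^ 2 := Nat.pow_le_pow_left hcard 2

theorem sum_card_linkedSet_le [Finite V] (hG : ShallowDensityLE G d a)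
    (hS : ∀ t ∉ S, ∃ S', S ⊆ S' ∧ (linkedSet G S' d t).card ≤ k) :
    ∑ v ∈ S, (linkedSet G S (d + 1) v).card ≤
      2 * a * (1 + (d + 2) * ((k + 1) ^ d) ^ 2) * S.card := by
  let P : Finset (V × V) := {p ∈ S ×ˢ S | p.2 ≠ p.1 ∧ ∃ I, IsLink G S (d + 1) p.1 p.2 I}
  have hPS : P ⊆ S ×ˢ S := Finset.filter_subset _ _
  have hsum : ∑ v ∈ S, (linkedSet G S (d + 1) v).card = P.card := by
    simp only [P, linkedSet, Finset.card_filter, Finset.sum_product]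
  have hex (p : V × V) : ∃ I, p ∈ P → IsLink G S (d + 1) p.1 p.2 I := by
    by_cases hp : p ∈ P
    · exact (Finset.mem_filter.mp hp).2.2.imp fun I hI _ => hI
    · exact ⟨∅, fun h => absurd h hp⟩
  choose I hI using hex
  rw [hsum]
  calc P.card ≤ 2 * (a * S.card) * (1 + (d + 2) * ((k + 1) ^ d) ^ 2) :=
        card_le_of_bounded_overlap (fun p hp => (hI p hp).card_le)
          (card_filter_mem_link_le hS hPS hI) fun M hM hdisj =>
            card_le_of_pairwiseDisjoint_links hG (hM.trans hPS)
              (fun p hp => (Finset.mem_filter.mp (hM hp)).2.1.symm) (fun p hp => hI p (hM hp)) hdisj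
    _ = 2 * a * (1 + (d + 2) * ((k + 1) ^ d) ^ 2) * S.card := by ring

end LinkedPairs

section Admissible

variable {V : Type*} {G : SimpleGraph V} {r a : ℕ}

/-- A bound for the number of vertices joined to the last vertex of a suitable order by links of
length at most `d`, for all `d ≤ r + 1` simultaneously, in a graph of shallow density `a` at depth
`r`. The factor `r + 1` comes from averaging over all `d` at once. -/
def linkBound (r a : ℕ) : ℕ → ℕ
  | 0 => 0
  | d + 1 => (r + 1) * (2 * a * (1 + (d + 2) * ((linkBound r a d + 1) ^ d) ^ 2))

theorem exists_mem_card_linkedSet_le [Finite V] (hG : ShallowDensityLE G r a) {S : Finset V}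
    (hS : S.Nonempty)
    (hlater : ∀ t ∉ S, ∃ S', S ⊆ S' ∧ ∀ d ≤ r + 1, (linkedSet G S' d t).card ≤ linkBound r a d) :
    ∃ v ∈ S, ∀ d ≤ r + 1, (linkedSet G S d v).card ≤ linkBound r a d := by
  obtain ⟨v, hvS, hv⟩ := exists_forall_le_card_mul_of_sum_le hS (T := Finset.range (r + 1))
    (N := fun d v => (linkedSet G S (d + 1) v).card) fun d hd => by
      have hdr : d ≤ r := Nat.le_of_lt_succ (Finset.mem_range.mp hd)
      exact sum_card_linkedSet_le (hG.anti hdr) fun t ht =>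
        (hlater t ht).imp fun S' hS' => ⟨hS'.1, hS'.2 d (hdr.trans r.le_succ)⟩
  refine ⟨v, hvS, fun d hd => ?_⟩
  cases d with
  | zero => rw [linkedSet_zero, Finset.card_empty, linkBound]
  | succ d => simpa [linkBound] using hv d (Finset.mem_range.mpr hd)

theorem exists_isWeakColoring_of_shallowDensityLE [Finite V] (hG : ShallowDensityLE G r a) :
    ∃ (_ : LinearOrder V) (c : V → Fin ((linkBound r a (r + 1) + 1) ^ (r + 1) + 1)),
      IsWeakColoring G (r + 1) c := by
  have := Fintype.ofFinite V
  obtain ⟨hV, hlink⟩ := exists_linearOrder_of_step (V := V) fun _ =>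
    exists_mem_card_linkedSet_le hG
  refine ⟨hV, exists_isWeakColoring (card_weaklyReachable_le fun v => ?_)⟩
  convert hlink v (r + 1) le_rfl

end Admissible

/-! ### Complete minors in dense graphs -/

section DenseNeighborhood

variable {V : Type*} {G : SimpleGraph V} {U A : Finset V} {c : ℕ} {v y : V}

/-- The sum of the degrees in the subgraph of `G` induced by `U`, which is twice its number of
edges. -/
noncomputable def inducedDegreeSum (G : SimpleGraph V) (U : Finset V) : ℕ :=
  ∑ x ∈ U, {z ∈ U | G.Adj x z}.card

/-- The vertices of `U` with a neighbor in `A`. -/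
noncomputable def neighborsIn (G : SimpleGraph V) (A U : Finset V) : Finset V :=
  {z ∈ U | ∃ x ∈ A, G.Adj x z}

theorem mem_neighborsIn : y ∈ neighborsIn G A U ↔ y ∈ U ∧ ∃ x ∈ A, G.Adj x y := by
  rw [neighborsIn, Finset.mem_filter]

/-- The sum of the degrees in the graph obtained from the one induced by `A ∪ U` by contracting `A`
to a single vertex, for `A` disjoint from `U`. -/
noncomputable def contractedDegreeSum (G : SimpleGraph V) (A U : Finset V) : ℕ :=
  inducedDegreeSum G U + 2 * (neighborsIn G A U).card

theorem inducedDegreeSum_insert (hy : y ∉ U) :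
    inducedDegreeSum G (insert y U) = inducedDegreeSum G U + 2 * {z ∈ U | G.Adj y z}.card := by
  have hins (x : V) : {z ∈ insert y U | G.Adj x z}.card =
      (if G.Adj x y then 1 else 0) + {z ∈ U | G.Adj x z}.card := by
    rw [Finset.card_filter, Finset.sum_insert hy, ← Finset.card_filter]
  have hcol : ∑ x ∈ U, (if G.Adj x y then 1 else 0) = {z ∈ U | G.Adj y z}.card := by
    simp only [Finset.card_filter, G.adj_comm y]
  simp only [inducedDegreeSum, Finset.sum_insert hy, hins, Finset.sum_add_distrib, hcol,
    SimpleGraph.irrefl, if_false]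
  ring

theorem contractedDegreeSum_singleton_erase (hv : v ∈ U) :
    contractedDegreeSum G {v} (U.erase v) = inducedDegreeSum G U := by
  rw [← Finset.insert_erase hv, inducedDegreeSum_insert (U.notMem_erase v), contractedDegreeSum,
    Finset.erase_insert (U.notMem_erase v), neighborsIn]
  simp only [Finset.mem_singleton, exists_eq_left]

/-- Contracting the edge between `A` and `y` destroys it and merges the two edges to each common
neighbor. -/
theorem contractedDegreeSum_insert_erase (hy : y ∈ neighborsIn G A U) :
    contractedDegreeSum G (insert y A) (U.erase y) +
      2 * ({z ∈ neighborsIn G A U | G.Adj y z}.card + 1) = contractedDegreeSum G A U := by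
  have hyU : y ∈ U := (mem_neighborsIn.mp hy).1
  have hdeg : inducedDegreeSum G U =
      inducedDegreeSum G (U.erase y) + 2 * {z ∈ U.erase y | G.Adj y z}.card := by
    rw [← inducedDegreeSum_insert (U.notMem_erase y), Finset.insert_erase hyU]
  have hunion : neighborsIn G (insert y A) (U.erase y) =
      {z ∈ U.erase y | G.Adj y z} ∪ (neighborsIn G A U).erase y := by
    ext z
    simp only [mem_neighborsIn, Finset.mem_union, Finset.mem_filter, Finset.mem_erase,
      Finset.exists_mem_insert]
    tauto
  have hinter : {z ∈ neighborsIn G A U | G.Adj y z} =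
      {z ∈ U.erase y | G.Adj y z} ∩ (neighborsIn G A U).erase y := by
    ext z
    simp only [mem_neighborsIn, Finset.mem_inter, Finset.mem_filter, Finset.mem_erase]
    have := G.ne_of_adj (a := y) (b := z)
    tauto
  have hcard := Finset.card_union_add_card_inter {z ∈ U.erase y | G.Adj y z}
    ((neighborsIn G A U).erase y)
  rw [← hunion, ← hinter] at hcard
  have herase := Finset.card_erase_add_one hy
  simp only [contractedDegreeSum]
  lia

theorem connected_induce_singleton : (G.induce (({v} : Finset V) : Set V)).Connected := by
  rw [Finset.coe_singleton, SimpleGraph.induce_singleton_eq_top]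
  exact SimpleGraph.connected_top

theorem connected_induce_insert (hA : (G.induce (A : Set V)).Connected)
    (hy : ∃ x ∈ A, G.Adj x y) : (G.induce (insert y A : Finset V)).Connected := by
  obtain ⟨x, hx, hxy⟩ := hy
  have hunion : ((insert y A : Finset V) : Set V) = ({y, x} : Set V) ∪ A := by
    rw [Finset.coe_insert, Set.insert_union, Set.singleton_union,
      Set.insert_eq_of_mem (Finset.mem_coe.mpr hx)]
  rw [hunion]
  exact SimpleGraph.induce_union_connected
    (SimpleGraph.induce_pair_connected_of_adj hxy.symm).preconnected hA.preconnected
    ⟨x, by simp, hx⟩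

/-- `N` is a set of neighbors of the connected set `A` that induces a graph of minimum degree at
least `c`. -/
structure IsDenseNeighborhood (G : SimpleGraph V) (c : ℕ) (A N : Finset V) : Prop where
  connected : (G.induce (A : Set V)).Connected
  disjoint : Disjoint A N
  nonempty : N.Nonempty
  exists_adj : ∀ y ∈ N, ∃ x ∈ A, G.Adj x y
  le_card : ∀ y ∈ N, c ≤ {z ∈ N | G.Adj y z}.card

/-- Contract edges into `A` for as long as the average degree permits. When this stops, every
further contraction would merge many edges: `A` and each of its neighbors have many common
neighbors. -/
theorem exists_isDenseNeighborhood_of_contracted (hc : 0 < c)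
    (hA : (G.induce (A : Set V)).Connected) (hAU : Disjoint A U)
    (h : 2 * c * (U.card + 1) ≤ contractedDegreeSum G A U) :
    ∃ A' N : Finset V, A' ⊆ A ∪ U ∧ N ⊆ U ∧ IsDenseNeighborhood G c A' N := by
  induction U using Finset.strongInduction generalizing A with
  | H U ih =>
  have contract {A₁ : Finset V} {y : V} (hy : y ∈ U) (hA₁U : A₁ ⊆ insert y A)
      (hA₁ : (G.induce (A₁ : Set V)).Connected)
      (h₁ : 2 * c * U.card ≤ contractedDegreeSum G A₁ (U.erase y)) :
      ∃ A' N : Finset V, A' ⊆ A ∪ U ∧ N ⊆ U ∧ IsDenseNeighborhood G c A' N := by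
    have hdisj : Disjoint A₁ (U.erase y) :=
      Disjoint.mono_left hA₁U (Finset.disjoint_insert_left.mpr
        ⟨U.notMem_erase y, hAU.mono_right (U.erase_subset y)⟩)
    obtain ⟨A', N, hA', hN, hdense⟩ := ih (U.erase y) (Finset.erase_ssubset hy) hA₁ hdisj
      (by rwa [Finset.card_erase_add_one hy])
    refine ⟨A', N, hA'.trans (Finset.union_subset (hA₁U.trans ?_) ?_),
      hN.trans (U.erase_subset y), hdense⟩
    · exact Finset.insert_subset (Finset.mem_union_right _ hy) Finset.subset_union_left
    · exact (U.erase_subset y).trans Finset.subset_union_right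
  obtain hN | hN := (neighborsIn G A U).eq_empty_or_nonempty
  · have hD : 2 * c * (U.card + 1) ≤ inducedDegreeSum G U := by
      simpa [contractedDegreeSum, hN] using h
    obtain ⟨v, hv⟩ : U.Nonempty := by
      refine Finset.nonempty_iff_ne_empty.mpr ?_
      rintro rfl
      simp [inducedDegreeSum, hc.ne'] at hD
    refine contract (A₁ := {v}) hv (by simp) connected_induce_singleton ?_
    rw [contractedDegreeSum_singleton_erase hv]
    exact (Nat.mul_le_mul_left _ U.card.le_succ).trans hD
  by_cases hdense : ∀ y ∈ neighborsIn G A U, c ≤ {z ∈ neighborsIn G A U | G.Adj y z}.card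
  · have hsub : neighborsIn G A U ⊆ U := Finset.filter_subset _ _
    exact ⟨A, neighborsIn G A U, Finset.subset_union_left, hsub, hA, hAU.mono_right hsub, hN,
      fun y hy => (mem_neighborsIn.mp hy).2, hdense⟩
  · push Not at hdense
    obtain ⟨y, hy, hlt⟩ := hdense
    obtain ⟨hyU, hyA⟩ := mem_neighborsIn.mp hy
    refine contract hyU subset_rfl (connected_induce_insert hA hyA) ?_
    rw [← contractedDegreeSum_insert_erase hy] at h
    lia

theorem exists_isDenseNeighborhood (hc : 0 < c) (hU : U.Nonempty)
    (h : 2 * c * U.card ≤ inducedDegreeSum G U) :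
    ∃ A N : Finset V, A ⊆ U ∧ N ⊆ U ∧ IsDenseNeighborhood G c A N := by
  obtain ⟨v, hv⟩ := hU
  obtain ⟨A, N, hA, hN, hdense⟩ := exists_isDenseNeighborhood_of_contracted (A := {v})
    (U := U.erase v) hc connected_induce_singleton (by simp)
    (by rwa [Finset.card_erase_add_one hv, contractedDegreeSum_singleton_erase hv])
  rw [← Finset.insert_eq, Finset.insert_erase hv] at hA
  exact ⟨A, N, hA, hN.trans (U.erase_subset v), hdense⟩

end DenseNeighborhood

section CompleteMinor

variable {V W X : Type*} {G : SimpleGraph V} {H : SimpleGraph W} {K : SimpleGraph X} {t : ℕ}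

/-- `B` is a model of a complete minor of `G`: disjoint connected branch sets, any two of which are
adjacent. -/
structure IsCompleteModel (G : SimpleGraph V) (B : Fin t → Set V) : Prop where
  connected : ∀ i, (G.induce (B i)).Connected
  pairwise_disjoint : Pairwise (Disjoint on B)
  exists_adj : Pairwise fun i j => ∃ x ∈ B i, ∃ y ∈ B j, G.Adj x y

theorem IsCompleteModel.isMinorOf {B : Fin t → Set V} (h : IsCompleteModel G B) :
    IsMinorOf (SimpleGraph.completeGraph (Fin t)) G :=
  ⟨B, h.pairwise_disjoint, fun i => Set.nonempty_coe_sort.mp (h.connected i).nonempty, h.connected,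
    fun _ _ hij => h.exists_adj hij⟩

theorem IsCompleteModel.cons {B : Fin t → Set V} {A : Set V} (h : IsCompleteModel G B)
    (hA : (G.induce A).Connected) (hdisj : ∀ i, Disjoint A (B i))
    (hadj : ∀ i, ∃ x ∈ A, ∃ y ∈ B i, G.Adj x y) :
    IsCompleteModel G (Fin.cons A B : Fin (t + 1) → Set V) where
  connected i := by
    cases i using Fin.cases with
    | zero => exact hA
    | succ i => exact h.connected i
  pairwise_disjoint i j hij := by
    cases i using Fin.cases with
    | zero =>
      cases j using Fin.cases with
      | zero => exact absurd rfl hij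
      | succ j => exact hdisj j
    | succ i =>
      cases j using Fin.cases with
      | zero => exact (hdisj i).symm
      | succ j => exact h.pairwise_disjoint (ne_of_apply_ne Fin.succ hij)
  exists_adj i j hij := by
    cases i using Fin.cases with
    | zero =>
      cases j using Fin.cases with
      | zero => exact absurd rfl hij
      | succ j => exact hadj j
    | succ i =>
      cases j using Fin.cases with
      | zero =>
        obtain ⟨x, hx, y, hy, hxy⟩ := hadj i
        exact ⟨y, hy, x, hx, hxy.symm⟩
      | succ j => exact h.exists_adj (ne_of_apply_ne Fin.succ hij)

theorem exists_isCompleteModel (t : ℕ) {U : Finset V} (hU : U.Nonempty)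
    (h : 2 * 2 ^ t * U.card ≤ inducedDegreeSum G U) :
    ∃ B : Fin t → Set V, (∀ i, B i ⊆ U) ∧ IsCompleteModel G B := by
  induction t generalizing U with
  | zero => exact ⟨finZeroElim, finZeroElim, finZeroElim, finZeroElim, finZeroElim⟩
  | succ t ih =>
    obtain ⟨A, N, hAU, hNU, hN⟩ := exists_isDenseNeighborhood (by positivity) hU h
    have hdeg : 2 * 2 ^ t * N.card ≤ inducedDegreeSum G N := by
      rw [← pow_succ', mul_comm, ← smul_eq_mul]
      exact Finset.card_nsmul_le_sum _ _ _ hN.le_card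
    obtain ⟨B, hBN, hB⟩ := ih hN.nonempty hdeg
    refine ⟨Fin.cons (A : Set V) B, Fin.cases (Finset.coe_subset.mpr hAU) fun i =>
      (hBN i).trans (Finset.coe_subset.mpr hNU), hB.cons hN.connected (fun i => ?_) fun i => ?_⟩
    · exact (Finset.disjoint_coe.mpr hN.disjoint).mono_right (hBN i)
    · obtain ⟨y, hy⟩ := Set.nonempty_coe_sort.mp (hB.connected i).nonempty
      obtain ⟨x, hx, hxy⟩ := hN.exists_adj y (hBN i hy)
      exact ⟨x, hx, y, hy, hxy⟩

theorem inducedDegreeSum_univ [Fintype V] :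
    inducedDegreeSum G Finset.univ = 2 * G.edgeSet.ncard := by
  rw [← SimpleGraph.coe_edgeFinset, Set.ncard_coe_finset, ← G.sum_degrees_eq_twice_card_edges,
    inducedDegreeSum]
  simp only [← SimpleGraph.neighborFinset_eq_filter, SimpleGraph.card_neighborFinset_eq_degree]

theorem ncard_edgeSet_le_of_not_isMinorOf [Fintype V]
    (h : ¬ IsMinorOf (SimpleGraph.completeGraph (Fin t)) G) :
    G.edgeSet.ncard ≤ 2 ^ t * Fintype.card V := by
  by_contra! hlt
  have hV : (Finset.univ : Finset V).Nonempty := by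
    obtain ⟨e, -⟩ := Set.nonempty_of_ncard_ne_zero (Nat.ne_zero_of_lt hlt)
    exact ⟨e.out.1, Finset.mem_univ _⟩
  obtain ⟨B, -, hB⟩ := exists_isCompleteModel t hV (G := G) (by
    rw [inducedDegreeSum_univ, mul_assoc, Finset.card_univ]
    exact Nat.mul_le_mul_left 2 hlt.le)
  exact h hB.isMinorOf

theorem connected_induce_biUnion {S : Set V} {B : V → Set W} (hS : (G.induce S).Connected)
    (hB : ∀ v, (H.induce (B v)).Connected)
    (hadj : ∀ u v, G.Adj u v → ∃ x ∈ B u, ∃ y ∈ B v, H.Adj x y) :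
    (H.induce (⋃ v ∈ S, B v)).Connected := by
  have hsub (s : S) : B s ⊆ ⋃ v ∈ S, B v := Set.subset_biUnion_of_mem s.2
  have hbranch (s : S) {x y : W} (hx : x ∈ B s) (hy : y ∈ B s) :
      (H.induce (⋃ v ∈ S, B v)).Reachable ⟨x, hsub s hx⟩ ⟨y, hsub s hy⟩ :=
    ((hB s).preconnected ⟨x, hx⟩ ⟨y, hy⟩).map (H.induceHomOfLE (hsub s)).toHom
  have hwalk {s t : S} (p : (G.induce S).Walk s t) {x y : W} (hx : x ∈ B s) (hy : y ∈ B t) :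
      (H.induce (⋃ v ∈ S, B v)).Reachable ⟨x, hsub s hx⟩ ⟨y, hsub t hy⟩ := by
    induction p generalizing x with
    | nil => exact hbranch _ hx hy
    | @cons s s' _ h _ ih =>
      obtain ⟨x', hx', y', hy', hxy⟩ := hadj _ _ h
      have hstep : (H.induce (⋃ v ∈ S, B v)).Adj ⟨x', hsub s hx'⟩ ⟨y', hsub s' hy'⟩ := hxy
      exact (hbranch s hx hx').trans (hstep.reachable.trans (ih hy' hy))
  obtain ⟨s⟩ := hS.nonempty
  obtain ⟨x, hx⟩ := (hB s).nonempty
  rw [SimpleGraph.connected_iff_exists_forall_reachable]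
  refine ⟨⟨x, hsub s hx⟩, fun ⟨y, hy⟩ => ?_⟩
  obtain ⟨t, ht, hyt⟩ := Set.mem_iUnion₂.mp hy
  obtain ⟨p⟩ := hS.preconnected s ⟨t, ht⟩
  exact hwalk p hx hyt

theorem IsMinorOf.trans (hGH : IsMinorOf G H) (hHK : IsMinorOf H K) : IsMinorOf G K := by
  obtain ⟨B, hBdisj, hBne, hBconn, hBadj⟩ := hGH
  obtain ⟨D, hDdisj, hDne, hDconn, hDadj⟩ := hHK
  refine ⟨fun u => ⋃ v ∈ B u, D v, fun u u' huu' => ?_, fun u => ?_,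
    fun u => connected_induce_biUnion (hBconn u) hDconn hDadj, fun u u' huu' => ?_⟩
  · refine Set.disjoint_iUnion₂_left.mpr fun v hv => Set.disjoint_iUnion₂_right.mpr fun v' hv' => ?_
    exact hDdisj (Set.disjoint_iff_forall_ne.mp (hBdisj huu') hv hv')
  · exact Set.nonempty_biUnion.mpr ((hBne u).imp fun v hv => ⟨hv, hDne v⟩)
  · obtain ⟨v, hv, v', hv', hvv'⟩ := hBadj u u' huu'
    obtain ⟨x, hx, y, hy, hxy⟩ := hDadj v v' hvv'
    exact ⟨x, Set.mem_biUnion hv hx, y, Set.mem_biUnion hv' hy, hxy⟩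

theorem IsShallowMinor.isMinorOf {d : ℕ} (h : IsShallowMinor d G H) : IsMinorOf G H := by
  obtain ⟨B, hB, hrad, hadj⟩ := h
  refine ⟨B, hB, fun v => (hrad v).elim fun c _ => ⟨c, c.2⟩, fun v => ?_, hadj⟩
  rw [SimpleGraph.connected_iff_exists_forall_reachable]
  exact (hrad v).imp fun c hc y => (hc y).1

theorem shallowDensityLE_of_not_isMinorOf
    (h : ¬ IsMinorOf (SimpleGraph.completeGraph (Fin t)) G) (d : ℕ) :
    ShallowDensityLE G d (2 ^ t) := fun m H hH => by
  simpa using ncard_edgeSet_le_of_not_isMinorOf fun hK => h (hK.trans hH.isMinorOf)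

end CompleteMinor

theorem disNumber_bounded_of_boundedExpansion_general.{u} :
    (∀ a : ℕ, ∃ c : ℕ, ∀ (V : Type u) [Fintype V] (G : SimpleGraph V),
      ShallowDensityLE G 2 a → disNumber G ≤ c) ∧
    (∀ t : ℕ, ∃ c : ℕ, ∀ (V : Type u) [Fintype V] (G : SimpleGraph V),
      ¬ IsMinorOf (SimpleGraph.completeGraph (Fin t)) G → disNumber G ≤ c) := by
  have bounded_of_density (a : ℕ) : ∃ c : ℕ, ∀ (V : Type u) [Fintype V] (G : SimpleGraph V),
      ShallowDensityLE G 2 a → disNumber G ≤ c :=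
    ⟨_, fun _ _ _ hG => by
      obtain ⟨_, _, hcol⟩ := exists_isWeakColoring_of_shallowDensityLE hG
      exact hcol.disNumber_le⟩
  exact ⟨bounded_of_density, fun t => (bounded_of_density (2 ^ t)).imp fun _ hc V _ G hG =>
    hc V G (shallowDensityLE_of_not_isMinorOf hG 2)⟩

/-- For every class `C` of finite simple graphs of bounded expansion there is
an absolute constant `c` with `dis[G] ≤ c` for all `G ∈ C`; in particular such a constant
exists for the class of all planar graphs. -/
theorem disNumber_bounded_of_boundedExpansion :
    (∀ C : GraphClass, BoundedExpansion C →
      ∃ c : ℕ, ∀ (n : ℕ), ∀ G ∈ C n, disNumber G ≤ c) ∧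
    (∃ c : ℕ, ∀ (n : ℕ) (G : SimpleGraph (Fin n)), IsPlanar G → disNumber G ≤ c) := by
  refine ⟨fun C hC => ?_, ?_⟩
  · obtain ⟨a, ha⟩ := hC 2
    obtain ⟨c, hc⟩ := disNumber_bounded_of_boundedExpansion_general.1 a
    exact ⟨c, fun n G hG => hc _ G fun m H hH => ha m H ⟨n, G, hG, hH⟩⟩
  · obtain ⟨c, hc⟩ := disNumber_bounded_of_boundedExpansion_general.2 5
    exact ⟨c, fun n G hG => hc _ G hG.1⟩

end InducedArboricity
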